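/- Let L > 0 and let f ∈ C²([0, L]) be real-valued. Set M₀ = max |f|, M₁ = max |f′|, M₂ = max |f″| on [0, L], and assume M₀, M₁, M₂ > 0. Then at least one of the following holds: M₁² ≤ 4 M₀ M₂, or M₁ < 8 M₀ / L. -/

import Mathlib

/-!
Every point `x` of `[a, b]` has a point of `[a, b]` at each distance `h ≤ (b - a) / 2`, so
Taylor's formula at `x` gives `‖f' x‖ h ≤ 2 M₀ + M₂ h ^ 2 / 2` for all these `h`.
If `‖f' x‖ ≤ M₂ (b - a) / 2`, the optimal choice is `h = ‖f' x‖ / M₂`, which yields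
`‖f' x‖ ^ 2 ≤ 4 M₀ M₂`; otherwise the quadratic term is absorbed at the endpoint
`h = (b - a) / 2`, which yields `‖f' x‖ < 8 M₀ / (b - a)`.
-/

open Set

section Taylor

open ContinuousLinearMap

variable {E F : Type*} [NormedAddCommGroup E] [NormedSpace ℝ E]
  [NormedAddCommGroup F] [NormedSpace ℝ F]

theorem norm_image_sub_sub_hasFDerivWithin_le {f : E → F} {f' : E → E →L[ℝ] F} {s : Set E}
    {x y : E} {C : ℝ} (hs : StarConvex ℝ x s)
    (hf : ∀ z ∈ s, HasFDerivWithinAt f (f' z) s z)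
    (hf' : ∀ z ∈ s, ‖f' z - f' x‖ ≤ C * ‖z - x‖) (hy : y ∈ s) :
    ‖f y - f x - f' x (y - x)‖ ≤ C / 2 * ‖y - x‖ ^ 2 := by
  set v := y - x
  have mem_s : MapsTo (fun t : ℝ ↦ x + t • v) (Icc 0 1) s :=
    fun t ht ↦ hs.add_smul_sub_mem hy ht.1 ht.2
  have hasDeriv_remainder : ∀ t ∈ Icc (0 : ℝ) 1,
      HasDerivWithinAt (fun t : ℝ ↦ f (x + t • v) - f x - t • f' x v)
        ((f' (x + t • v) - f' x) v) (Icc 0 1) t := by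
    intro t ht
    have hline : HasDerivWithinAt (fun t : ℝ ↦ x + t • v) v (Icc 0 1) t := by
      simpa using ((hasDerivWithinAt_id t (Icc 0 1)).smul_const v).const_add x
    have hlinear : HasDerivWithinAt (fun t : ℝ ↦ t • f' x v) (f' x v) (Icc 0 1) t := by
      simpa using (hasDerivWithinAt_id t (Icc 0 1)).smul_const (f' x v)
    exact (((hf _ (mem_s ht)).comp_hasDerivWithinAt t hline mem_s).sub_const _).sub hlinear
  have hasDeriv_bound (t : ℝ) :
      HasDerivAt (fun t ↦ C / 2 * ‖v‖ ^ 2 * t ^ 2) (C * ‖v‖ ^ 2 * t) t :=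
    ((hasDerivAt_pow 2 t).const_mul (C / 2 * ‖v‖ ^ 2)).congr_deriv (by ring)
  have norm_deriv_le : ∀ t ∈ Ico (0 : ℝ) 1,
      ‖(f' (x + t • v) - f' x) v‖ ≤ C * ‖v‖ ^ 2 * t := by
    intro t ht
    calc ‖(f' (x + t • v) - f' x) v‖
      _ ≤ C * ‖x + t • v - x‖ * ‖v‖ :=
        le_of_opNorm_le _ (hf' _ (mem_s (Ico_subset_Icc_self ht))) v
      _ = C * ‖v‖ ^ 2 * t := by
        rw [add_sub_cancel_left, norm_smul, Real.norm_of_nonneg ht.1]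
        ring
  simpa [v] using image_norm_le_of_norm_deriv_right_le_deriv_boundary
    (fun t ht ↦ (hasDeriv_remainder t ht).continuousWithinAt)
    (fun t ht ↦ (hasDeriv_remainder t (Ico_subset_Icc_self ht)).mono_of_mem_nhdsWithin
      (Icc_mem_nhdsGE_of_mem ht))
    (by simp) hasDeriv_bound norm_deriv_le (right_mem_Icc.2 zero_le_one)

theorem norm_image_sub_sub_hasDerivWithin_le {f f' : ℝ → F} {s : Set ℝ} {x y C : ℝ}
    (hs : StarConvex ℝ x s) (hf : ∀ z ∈ s, HasDerivWithinAt f (f' z) s z)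
    (hf' : ∀ z ∈ s, ‖f' z - f' x‖ ≤ C * |z - x|) (hy : y ∈ s) :
    ‖f y - f x - (y - x) • f' x‖ ≤ C / 2 * |y - x| ^ 2 :=
  norm_image_sub_sub_hasFDerivWithin_le hs (fun z hz ↦ (hf z hz).hasFDerivWithinAt)
    (fun z hz ↦ by
      rw [← toSpanSingletonLIE_apply, ← toSpanSingletonLIE_apply, ← map_sub,
        LinearIsometryEquiv.norm_map]
      exact hf' z hz) hy

theorem norm_hasDerivWithin_mul_abs_sub_le {f f' : ℝ → F} {s : Set ℝ} {x y C : ℝ}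
    (hs : StarConvex ℝ x s) (hf : ∀ z ∈ s, HasDerivWithinAt f (f' z) s z)
    (hf' : ∀ z ∈ s, ‖f' z - f' x‖ ≤ C * |z - x|) (hy : y ∈ s) :
    ‖f' x‖ * |y - x| ≤ ‖f y‖ + ‖f x‖ + C / 2 * |y - x| ^ 2 := by
  calc ‖f' x‖ * |y - x|
    _ = ‖f y - f x - (f y - f x - (y - x) • f' x)‖ := by
      rw [sub_sub_cancel, norm_smul, Real.norm_eq_abs, mul_comm]
    _ ≤ ‖f y‖ + ‖f x‖ + ‖f y - f x - (y - x) • f' x‖ :=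
      (norm_sub_le _ _).trans (by gcongr; exact norm_sub_le _ _)
    _ ≤ ‖f y‖ + ‖f x‖ + C / 2 * |y - x| ^ 2 := by
      gcongr
      exact norm_image_sub_sub_hasDerivWithin_le hs hf hf' hy

end Taylor

theorem exists_mem_Icc_abs_sub_eq {a b x h : ℝ} (hx : x ∈ Icc a b) (hh : h ∈ Icc 0 ((b - a) / 2)) :
    ∃ y ∈ Icc a b, |y - x| = h := by
  obtain ⟨hax, hxb⟩ := hx
  obtain ⟨h_nonneg, h_le⟩ := hh
  rcases le_total x ((a + b) / 2) with hleft | hright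
  · exact ⟨x + h, ⟨by linarith, by linarith⟩, by simpa using h_nonneg⟩
  · exact ⟨x - h, ⟨by linarith, by linarith⟩, by simpa using h_nonneg⟩

theorem sq_le_or_lt_div_of_forall_mul_le {v A B r : ℝ} (hv : 0 ≤ v) (hr : 0 < r)
    (h : ∀ t ∈ Icc 0 r, v * t ≤ A + B / 2 * t ^ 2) : v ^ 2 ≤ 2 * A * B ∨ v < 2 * A / r := by
  rcases le_or_gt v (B * r) with hle | hlt
  · left
    have hB : 0 ≤ B := nonneg_of_mul_nonneg_left (hv.trans hle) hr
    rcases hB.eq_or_lt with rfl | hB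
    · have hv0 : v = 0 := by linarith
      simp [hv0]
    · have hopt := h (v / B) ⟨by positivity, by rwa [div_le_iff₀' hB]⟩
      field_simp at hopt
      linarith
  · right
    rw [lt_div_iff₀ hr]
    linarith [h r ⟨hr.le, le_rfl⟩, mul_lt_mul_of_pos_right hlt hr]

theorem stmt6_general {E : Type*} [NormedAddCommGroup E] [NormedSpace ℝ E] {a b : ℝ} (hab : a < b)
    {f f' : ℝ → E} {x M₀ M₂ : ℝ} (hx : x ∈ Icc a b)
    (hf : ∀ y ∈ Icc a b, HasDerivWithinAt f (f' y) (Icc a b) y)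
    (h0 : ∀ y ∈ Icc a b, ‖f y‖ ≤ M₀) (h2 : ∀ y ∈ Icc a b, ‖f' y - f' x‖ ≤ M₂ * |y - x|) :
    ‖f' x‖ ^ 2 ≤ 4 * M₀ * M₂ ∨ ‖f' x‖ < 8 * M₀ / (b - a) := by
  have taylor_le : ∀ t ∈ Icc 0 ((b - a) / 2), ‖f' x‖ * t ≤ 2 * M₀ + M₂ / 2 * t ^ 2 := by
    intro t ht
    obtain ⟨y, hy, rfl⟩ := exists_mem_Icc_abs_sub_eq hx ht
    linarith [norm_hasDerivWithin_mul_abs_sub_le ((convex_Icc a b).starConvex hx) hf h2 hy,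
      h0 x hx, h0 y hy]
  convert sq_le_or_lt_div_of_forall_mul_le (norm_nonneg _) (half_pos (sub_pos.2 hab)) taylor_le
    using 2
  · ring
  · rw [div_div_eq_mul_div]
    ring

/-- Landau-type inequality. If `f` is `C²` on `[0, L]` with
`M₀ = max |f| > 0`, `M₁ = max |f′| > 0`, `M₂ = max |f″| > 0`, then
`M₁² ≤ 4 M₀ M₂` or `M₁ < 8 M₀ / L`. -/
theorem stmt6 (L : ℝ) (hL : 0 < L) (f : ℝ → ℝ)
    (hf : ContDiffOn ℝ 2 f (Set.Icc 0 L)) (M₀ M₁ M₂ : ℝ)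
    (h0 : IsGreatest ((fun x => |f x|) '' Set.Icc 0 L) M₀)
    (h1 : IsGreatest ((fun x => |derivWithin f (Set.Icc 0 L) x|) '' Set.Icc 0 L) M₁)
    (h2 : IsGreatest
      ((fun x => |derivWithin (derivWithin f (Set.Icc 0 L)) (Set.Icc 0 L) x|) '' Set.Icc 0 L) M₂)
    (hM0 : 0 < M₀) (hM1 : 0 < M₁) (hM2 : 0 < M₂) :
    M₁ ^ 2 ≤ 4 * M₀ * M₂ ∨ M₁ < 8 * M₀ / L := by
  obtain ⟨⟨x, hx, rfl⟩, -⟩ := h1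
  have hf' : DifferentiableOn ℝ (derivWithin f (Icc 0 L)) (Icc 0 L) :=
    (hf.derivWithin (m := 1) (uniqueDiffOn_Icc hL) (by norm_num)).differentiableOn one_ne_zero
  simpa using stmt6_general hL hx
    (fun y hy ↦ (hf.differentiableOn two_ne_zero y hy).hasDerivWithinAt)
    (fun y hy ↦ h0.2 (mem_image_of_mem _ hy))
    (fun y hy ↦ (convex_Icc 0 L).norm_image_sub_le_of_norm_derivWithin_le hf'
      (fun z hz ↦ h2.2 (mem_image_of_mem _ hz)) hx hy)
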